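/- (Convergence radius.) Under the hypotheses of the main stability theorem — A := −((L + αM) ⊗ I_p), μ := λ_max((A + Aᵀ)/2) < 0, continuous e, e_L with ‖e(t)‖ ≤ √n·ḡ, ‖e_L(t)‖ ≤ ḡ, differentiable x_L with ‖ẋ_L(t)‖ ≤ c_r, and δ differentiable satisfying δ̇(t) = A δ(t) + A e(t) + (αM ⊗ I_p)(𝟙_n ⊗ e_L(t)) − 𝟙_n ⊗ ẋ_L(t) for t ≥ 0 — the disagreement converges to the ball of radius ε := ((√n·‖A‖ + α·‖M·𝟙_n‖)·ḡ + √n·c_r)/|μ| around the reference, in the sense that limsup_{t→∞} ‖δ(t)‖ ≤ ε. -/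

import Mathlib

open Matrix Filter
open scoped Kronecker

/-- The Euclidean norm of a finitely-indexed real vector. -/
noncomputable def eNorm {ι : Type*} [Fintype ι] (x : ι → ℝ) : ℝ :=
  ‖(EuclideanSpace.equiv ι ℝ).symm x‖

/-- The spectral norm of a real matrix: its operator norm as a linear map between
Euclidean spaces. -/
noncomputable def specNorm {ι κ : Type*} [Fintype ι] [Fintype κ] [DecidableEq κ]
    (A : Matrix ι κ ℝ) : ℝ :=
  ‖LinearMap.toContinuousLinearMap (Matrix.toEuclideanLin A)‖

/-! Along the trajectory `‖δ‖²` has derivative `2⟪δ, δ'⟫ ≤ 2μ‖δ‖² + 2b‖δ‖`, where `μ` is the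
logarithmic norm of `A` and `b` bounds the inputs (triggering errors and leader velocity).
Completing the square absorbs the cross term at the cost of half of the decay rate,
`2μ‖δ‖² + 2b‖δ‖ ≤ μ‖δ‖² + b² / |μ|`, and Grönwall's inequality with the negative rate `μ` bounds
`‖δ‖²` by a function of time that tends to `(b / |μ|)²`. -/

open scoped InnerProductSpace Topology

section DifferentialInequality

lemma tendsto_gronwallBound_atTop {K : ℝ} (hK : K < 0) (δ ε : ℝ) :
    Tendsto (gronwallBound δ K ε) atTop (𝓝 (-ε / K)) := by
  have exp_decay : Tendsto (fun t => Real.exp (K * t)) atTop (𝓝 0) :=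
    Real.tendsto_exp_atBot.comp (tendsto_id.const_mul_atTop_of_neg hK)
  rw [gronwallBound_of_K_ne_0 hK.ne]
  convert (exp_decay.const_mul δ).add ((exp_decay.sub_const 1).const_mul (ε / K)) using 2
  ring

lemma two_mul_le_neg_mul_sq_add_sq_div_abs {μ : ℝ} (hμ : μ < 0) (b r : ℝ) :
    2 * (b * r) ≤ -μ * r ^ 2 + b ^ 2 / |μ| := by
  have completed_square : -μ * r ^ 2 + b ^ 2 / |μ| - 2 * (b * r) = (-μ * r - b) ^ 2 / |μ| := by
    rw [abs_of_neg hμ]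
    field [hμ.ne]
  linarith [div_nonneg (sq_nonneg (-μ * r - b)) (abs_nonneg μ)]

variable {E : Type*} [NormedAddCommGroup E] [InnerProductSpace ℝ E] {x x' : ℝ → E} {μ b : ℝ}

lemma norm_sq_le_gronwallBound_of_inner_deriv_le (hμ : μ < 0)
    (hx : ∀ t, 0 ≤ t → HasDerivWithinAt x (x' t) (Set.Ici 0) t)
    (hinner : ∀ t, 0 ≤ t → ⟪x t, x' t⟫_ℝ ≤ μ * ‖x t‖ ^ 2 + b * ‖x t‖) {t : ℝ} (ht : 0 ≤ t) :
    ‖x t‖ ^ 2 ≤ gronwallBound (‖x 0‖ ^ 2) μ (b ^ 2 / |μ|) t := by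
  have hderiv (s : ℝ) (hs : 0 ≤ s) :
      HasDerivWithinAt (fun s => ‖x s‖ ^ 2) (2 * ⟪x s, x' s⟫_ℝ) (Set.Ici 0) s :=
    (hx s hs).norm_sq
  have hbound (s : ℝ) (hs : 0 ≤ s) : 2 * ⟪x s, x' s⟫_ℝ ≤ μ * ‖x s‖ ^ 2 + b ^ 2 / |μ| := by
    linarith [hinner s hs, two_mul_le_neg_mul_sq_add_sq_div_abs hμ b ‖x s‖]
  simpa only [sub_zero] using le_gronwallBound_of_liminf_deriv_right_le
    (fun s hs => (hderiv s hs.1).continuousWithinAt.mono Set.Icc_subset_Ici_self)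
    (fun s hs _ hr =>
      ((hderiv s hs.1).mono (Set.Ici_subset_Ici.2 hs.1)).liminf_right_slope_le hr)
    le_rfl (fun s hs => hbound s hs.1) t (Set.right_mem_Icc.2 ht)

lemma limsup_norm_le_of_inner_deriv_le (hμ : μ < 0) (hb : 0 ≤ b)
    (hx : ∀ t, 0 ≤ t → HasDerivWithinAt x (x' t) (Set.Ici 0) t)
    (hinner : ∀ t, 0 ≤ t → ⟪x t, x' t⟫_ℝ ≤ μ * ‖x t‖ ^ 2 + b * ‖x t‖) :
    limsup (fun t => ‖x t‖) atTop ≤ b / |μ| := by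
  have hle : ∀ᶠ t in atTop, ‖x t‖ ≤ √(gronwallBound (‖x 0‖ ^ 2) μ (b ^ 2 / |μ|) t) := by
    filter_upwards [eventually_ge_atTop 0] with t ht
    exact Real.le_sqrt_of_sq_le (norm_sq_le_gronwallBound_of_inner_deriv_le hμ hx hinner ht)
  have sqrt_limit : √(-(b ^ 2 / |μ|) / μ) = b / |μ| := by
    have limit_eq_sq : -(b ^ 2 / |μ|) / μ = (b / |μ|) ^ 2 := by
      rw [abs_of_neg hμ]
      field [hμ.ne]
    rw [limit_eq_sq, Real.sqrt_sq (by positivity)]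
  have hlim : Tendsto (fun t => √(gronwallBound (‖x 0‖ ^ 2) μ (b ^ 2 / |μ|) t)) atTop
      (𝓝 (b / |μ|)) :=
    sqrt_limit ▸ (tendsto_gronwallBound_atTop hμ _ _).sqrt
  calc limsup (fun t => ‖x t‖) atTop
      ≤ limsup (fun t => √(gronwallBound (‖x 0‖ ^ 2) μ (b ^ 2 / |μ|) t)) atTop :=
        limsup_le_limsup hle
          (isBoundedUnder_of ⟨0, fun _ => norm_nonneg _⟩).isCoboundedUnder_le
          hlim.isBoundedUnder_le
    _ = b / |μ| := hlim.limsup_eq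

end DifferentialInequality

section EuclideanNorm

lemma kronecker_one_mulVec_comp_snd {R ι ι' κ : Type*} [Semiring R] [Fintype ι'] [Fintype κ]
    [DecidableEq κ] (B : Matrix ι ι' R) (v : κ → R) :
    (B ⊗ₖ (1 : Matrix κ κ R)) *ᵥ (fun ij => v ij.2) = fun ij => (B *ᵥ 1) ij.1 * v ij.2 := by
  ext ⟨i, j⟩
  simp [mulVec, dotProduct, Fintype.sum_prod_type, Matrix.one_apply, Finset.sum_mul]

variable {ι ι' κ : Type*} [Fintype ι] [Fintype ι'] [Fintype κ]

lemma eNorm_nonneg (x : ι → ℝ) : 0 ≤ eNorm x := norm_nonneg _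

lemma eNorm_add_le (x y : ι → ℝ) : eNorm (x + y) ≤ eNorm x + eNorm y := norm_add_le _ _

lemma eNorm_sub_le (x y : ι → ℝ) : eNorm (x - y) ≤ eNorm x + eNorm y := norm_sub_le _ _

lemma eNorm_smul (a : ℝ) (x : ι → ℝ) : eNorm (a • x) = |a| * eNorm x := norm_smul a _

lemma inner_equiv_symm_eq_dotProduct (x y : ι → ℝ) :
    ⟪(EuclideanSpace.equiv ι ℝ).symm x, (EuclideanSpace.equiv ι ℝ).symm y⟫_ℝ = x ⬝ᵥ y := by
  simp [PiLp.inner_apply, dotProduct, mul_comm]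

lemma eNorm_sq (x : ι → ℝ) : eNorm x ^ 2 = x ⬝ᵥ x := by
  rw [← inner_equiv_symm_eq_dotProduct, real_inner_self_eq_norm_sq, eNorm]

lemma dotProduct_le_eNorm_mul_eNorm (x y : ι → ℝ) : x ⬝ᵥ y ≤ eNorm x * eNorm y := by
  rw [← inner_equiv_symm_eq_dotProduct]
  exact real_inner_le_norm _ _

lemma eNorm_one : eNorm (1 : ι → ℝ) = √(Fintype.card ι) := by
  rw [← Real.sqrt_sq (eNorm_nonneg _), eNorm_sq]
  simp

lemma eNorm_fst_mul_snd (u : ι → ℝ) (v : κ → ℝ) :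
    eNorm (fun ij : ι × κ => u ij.1 * v ij.2) = eNorm u * eNorm v := by
  rw [← sq_eq_sq₀ (eNorm_nonneg _) (mul_nonneg (eNorm_nonneg _) (eNorm_nonneg _)), mul_pow]
  simp only [eNorm_sq, dotProduct, Fintype.sum_prod_type, Finset.sum_mul_sum, mul_mul_mul_comm]

lemma eNorm_comp_snd (v : κ → ℝ) :
    eNorm (fun ij : ι × κ => v ij.2) = √(Fintype.card ι) * eNorm v := by
  simpa [eNorm_one] using eNorm_fst_mul_snd (1 : ι → ℝ) v

lemma eNorm_mulVec_le [DecidableEq κ] (A : Matrix ι κ ℝ) (x : κ → ℝ) :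
    eNorm (A *ᵥ x) ≤ specNorm A * eNorm x :=
  (Matrix.toEuclideanLin A).toContinuousLinearMap.le_opNorm _

lemma eNorm_kronecker_one_mulVec_comp_snd [DecidableEq κ] (B : Matrix ι ι' ℝ) (v : κ → ℝ) :
    eNorm ((B ⊗ₖ (1 : Matrix κ κ ℝ)) *ᵥ (fun ij => v ij.2)) = eNorm (B *ᵥ 1) * eNorm v := by
  rw [kronecker_one_mulVec_comp_snd, eNorm_fst_mul_snd]

lemma eNorm_consensus_input_le [DecidableEq ι] [DecidableEq κ] (A : Matrix (ι × κ) (ι × κ) ℝ)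
    (B : Matrix ι ι ℝ) (e : ι × κ → ℝ) (eL v : κ → ℝ) :
    eNorm (A *ᵥ e + (B ⊗ₖ (1 : Matrix κ κ ℝ)) *ᵥ (fun ij => eL ij.2) - fun ij => v ij.2) ≤
      specNorm A * eNorm e + eNorm (B *ᵥ 1) * eNorm eL + √(Fintype.card ι) * eNorm v := by
  rw [← eNorm_kronecker_one_mulVec_comp_snd, ← eNorm_comp_snd]
  refine (eNorm_sub_le _ _).trans (add_le_add_left ?_ _)
  exact (eNorm_add_le _ _).trans (add_le_add_left (eNorm_mulVec_le A e) _)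

end EuclideanNorm

section LogarithmicNorm

variable {ι : Type*} [Fintype ι] [DecidableEq ι]

open scoped MatrixOrder in
lemma dotProduct_mulVec_le_iSup_eigenvalues {S : Matrix ι ι ℝ} (hS : S.IsHermitian)
    (x : ι → ℝ) : x ⬝ᵥ (S *ᵥ x) ≤ (⨆ i, hS.eigenvalues i) * (x ⬝ᵥ x) := by
  have hle : S ≤ algebraMap ℝ (Matrix ι ι ℝ) (⨆ i, hS.eigenvalues i) := by
    refine le_algebraMap_of_spectrum_le (fun r hr => ?_) hS.isSelfAdjoint
    obtain ⟨i, rfl⟩ := hS.spectrum_real_eq_range_eigenvalues ▸ hr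
    exact le_ciSup (Set.finite_range _).bddAbove i
  have hnonneg := (Matrix.le_iff.1 hle).dotProduct_mulVec_nonneg x
  simpa [Algebra.algebraMap_eq_smul_one, sub_mulVec, smul_mulVec] using hnonneg

lemma dotProduct_mulVec_le_iSup_eigenvalues_symm_part {A : Matrix ι ι ℝ}
    (hsym : (((1 : ℝ) / 2) • (A + Aᵀ)).IsHermitian) (x : ι → ℝ) :
    x ⬝ᵥ (A *ᵥ x) ≤ (⨆ i, hsym.eigenvalues i) * (x ⬝ᵥ x) := by
  have htranspose : x ⬝ᵥ (Aᵀ *ᵥ x) = x ⬝ᵥ (A *ᵥ x) := by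
    rw [mulVec_transpose, dotProduct_comm, dotProduct_mulVec]
  calc x ⬝ᵥ (A *ᵥ x) = x ⬝ᵥ ((((1 : ℝ) / 2) • (A + Aᵀ)) *ᵥ x) := by
        rw [smul_mulVec, add_mulVec, dotProduct_smul, dotProduct_add, htranspose, smul_eq_mul]
        ring
    _ ≤ _ := dotProduct_mulVec_le_iSup_eigenvalues hsym x

lemma limsup_eNorm_le_of_hasDerivWithinAt_mulVec_add {A : Matrix ι ι ℝ}
    (hsym : (((1 : ℝ) / 2) • (A + Aᵀ)).IsHermitian) (hneg : (⨆ i, hsym.eigenvalues i) < 0)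
    {x w : ℝ → ι → ℝ} {b : ℝ} (hw : ∀ t, 0 ≤ t → eNorm (w t) ≤ b)
    (hx : ∀ t, 0 ≤ t → HasDerivWithinAt x (A *ᵥ x t + w t) (Set.Ici 0) t) :
    limsup (fun t => eNorm (x t)) atTop ≤ b / |⨆ i, hsym.eigenvalues i| := by
  have hb : 0 ≤ b := (eNorm_nonneg _).trans (hw 0 le_rfl)
  refine limsup_norm_le_of_inner_deriv_le hneg hb
    (fun t ht => (EuclideanSpace.equiv ι ℝ).symm.hasFDerivAt.comp_hasDerivWithinAt t (hx t ht))
    fun t ht => ?_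
  calc ⟪(EuclideanSpace.equiv ι ℝ).symm (x t),
          (EuclideanSpace.equiv ι ℝ).symm (A *ᵥ x t + w t)⟫_ℝ
      = x t ⬝ᵥ (A *ᵥ x t) + x t ⬝ᵥ w t := by
        rw [inner_equiv_symm_eq_dotProduct, dotProduct_add]
    _ ≤ (⨆ i, hsym.eigenvalues i) * (x t ⬝ᵥ x t) + eNorm (x t) * eNorm (w t) :=
        add_le_add (dotProduct_mulVec_le_iSup_eigenvalues_symm_part hsym (x t))
          (dotProduct_le_eNorm_mul_eNorm (x t) (w t))
    _ ≤ (⨆ i, hsym.eigenvalues i) * eNorm (x t) ^ 2 + b * eNorm (x t) := by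
        rw [eNorm_sq, mul_comm b]
        gcongr
        exacts [eNorm_nonneg _, hw t ht]

end LogarithmicNorm

/-- `B` is the paper's `αM` and `v` its leader velocity `ẋ_L`. -/
theorem event_triggered_consensus_convergence_radius_general {ι κ : Type*}
    [Fintype ι] [DecidableEq ι] [Fintype κ] [DecidableEq κ]
    {A : Matrix (ι × κ) (ι × κ) ℝ} (B : Matrix ι ι ℝ)
    (hsym : (((1 : ℝ) / 2) • (A + Aᵀ)).IsHermitian) (hneg : (⨆ i, hsym.eigenvalues i) < 0)
    {g c : ℝ} {e : ℝ → ι × κ → ℝ} {eL v : ℝ → κ → ℝ}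
    (he : ∀ t, 0 ≤ t → eNorm (e t) ≤ √(Fintype.card ι) * g)
    (heL : ∀ t, 0 ≤ t → eNorm (eL t) ≤ g)
    (hv : ∀ t, 0 ≤ t → eNorm (v t) ≤ c)
    {δ : ℝ → ι × κ → ℝ}
    (hδ : ∀ t, 0 ≤ t → HasDerivWithinAt δ
      (A *ᵥ δ t + A *ᵥ e t + (B ⊗ₖ (1 : Matrix κ κ ℝ)) *ᵥ (fun ij => eL t ij.2)
        - fun ij => v t ij.2) (Set.Ici 0) t) :
    limsup (fun t => eNorm (δ t)) atTop ≤
      ((√(Fintype.card ι) * specNorm A + eNorm (B *ᵥ 1)) * g + √(Fintype.card ι) * c)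
        / |⨆ i, hsym.eigenvalues i| := by
  have input_bound (t : ℝ) (ht : 0 ≤ t) :
      eNorm (A *ᵥ e t + (B ⊗ₖ (1 : Matrix κ κ ℝ)) *ᵥ (fun ij => eL t ij.2)
        - fun ij => v t ij.2) ≤
      (√(Fintype.card ι) * specNorm A + eNorm (B *ᵥ 1)) * g + √(Fintype.card ι) * c := by
    calc
      _ ≤ specNorm A * eNorm (e t) + eNorm (B *ᵥ 1) * eNorm (eL t)
          + √(Fintype.card ι) * eNorm (v t) := eNorm_consensus_input_le A B (e t) (eL t) (v t)
      _ ≤ specNorm A * (√(Fintype.card ι) * g) + eNorm (B *ᵥ 1) * g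
          + √(Fintype.card ι) * c := by
          gcongr
          exacts [norm_nonneg _, he t ht, eNorm_nonneg _, heL t ht, hv t ht]
      _ = _ := by ring
  refine limsup_eNorm_le_of_hasDerivWithinAt_mulVec_add hsym hneg input_bound fun t ht => ?_
  simpa only [add_assoc, add_sub_assoc] using hδ t ht

/-- **Convergence radius of the event-triggered consensus scheme.**
Under the hypotheses of the main stability theorem, the disagreement converges to the
ball of radius `ε = ((√n ‖A‖ + α ‖M 𝟙ₙ‖) ḡ + √n c_r) / |μ|` around the reference:
`limsup_{t → ∞} ‖δ t‖ ≤ ε`. -/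
theorem event_triggered_consensus_convergence_radius
    (n p : ℕ) (hn : 0 < n) (hp : 0 < p)
    (L M : Matrix (Fin n) (Fin n) ℝ) (α : ℝ) (hα : 0 < α)
    (A : Matrix (Fin n × Fin p) (Fin n × Fin p) ℝ)
    (hA : A = -((L + α • M) ⊗ₖ (1 : Matrix (Fin p) (Fin p) ℝ)))
    (hsym : (((1 : ℝ) / 2) • (A + Aᵀ)).IsHermitian)
    (μ : ℝ) (hμ : μ = ⨆ i, hsym.eigenvalues i) (hμneg : μ < 0)
    (g cr : ℝ) (hg : 0 ≤ g) (hcr : 0 ≤ cr)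
    (e : ℝ → (Fin n × Fin p → ℝ)) (eL : ℝ → (Fin p → ℝ))
    (he_cont : Continuous e) (heL_cont : Continuous eL)
    (he : ∀ t, 0 ≤ t → eNorm (e t) ≤ Real.sqrt n * g)
    (heL : ∀ t, 0 ≤ t → eNorm (eL t) ≤ g)
    (xL : ℝ → (Fin p → ℝ)) (hxL : Differentiable ℝ xL)
    (hxL' : ∀ t, 0 ≤ t → eNorm (deriv xL t) ≤ cr)
    (δ : ℝ → (Fin n × Fin p → ℝ)) (hδ : Differentiable ℝ δ)
    (hode : ∀ t, 0 ≤ t → deriv δ t =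
      A.mulVec (δ t) + A.mulVec (e t)
        + ((α • M) ⊗ₖ (1 : Matrix (Fin p) (Fin p) ℝ)).mulVec (fun ij => eL t ij.2)
        - fun ij => deriv xL t ij.2)
    (ε : ℝ)
    (hε : ε = ((Real.sqrt n * specNorm A + α * eNorm (M.mulVec fun _ => (1 : ℝ))) * g
        + Real.sqrt n * cr) / |μ|) :
    limsup (fun t => eNorm (δ t)) atTop ≤ ε := by
  subst hε hμ
  simpa [Pi.one_def, smul_mulVec, eNorm_smul, abs_of_pos hα] using
    event_triggered_consensus_convergence_radius_general (α • M) hsym hμneg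
      (by simpa using he) heL hxL' fun t ht => hode t ht ▸ (hδ t).hasDerivAt.hasDerivWithinAt
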